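/- Let k be a positive integer divisible by 4 and let C and t be as in Definition 8. Then C(a_i) = Z_t ξ_{t+1} for every i ∈ {1,...,k}; that is, the C-image of each word a_i coincides with the C-image of x_1 x_2 ... x_k, namely Z_t ξ_{t+1}. -/

import Mathlib

/-- The cycle `(1,3,5,...,k-1)` on `{1,...,k}` (as a function on `ℕ`,
fixing everything else in `{1,...,k}`). -/
def f1 (k : ℕ) : ℕ → ℕ := fun j => if j % 2 = 1 then (if j + 2 ≤ k then j + 2 else 1) else j

/-- The cycle `(2,6,10,...,k-2)` on `{1,...,k}`. -/
def g1 (k : ℕ) : ℕ → ℕ := fun j => if j % 4 = 2 then (if j + 4 ≤ k then j + 4 else 2) else j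

/-- The `k` permutations `v_1,...,v_k` of `{1,...,k}`:
`v_j = f_j = f1^j` for `1 ≤ j ≤ k/2` and `v_{k/2+j} = g_j = g1 ∘ f1^(j-1)` for `1 ≤ j ≤ k/2`. -/
def v (k i : ℕ) : ℕ → ℕ :=
  if i ≤ k / 2 then (f1 k)^[i] else g1 k ∘ (f1 k)^[i - k / 2 - 1]

/-- The word `a_i = x_{v_i(1)} x_{v_i(2)} ... x_{v_i(k)}` over the alphabet
`X = {x_1,...,x_k}`, where the letter `x_p` is encoded by its index `p : ℕ`. -/
def aw (k i : ℕ) : List ℕ := (List.range k).map (fun p => v k i (p + 1))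

/-- The words `J_1 = a_1`, `J_{m+1} = φ₀(J_m)` where `φ₀(x_i) = a_i` letterwise;
`Jw k m` is `J_{m+1}`, so `Jw k` enumerates `J_1, J_2, ...`. -/
def Jw (k : ℕ) : ℕ → List ℕ
  | 0 => aw k 1
  | m + 1 => (Jw k m).flatMap (aw k)

/-- The Zimin words over the alphabet `Ξ = {ξ_1, ξ_2, ...}` (the letter `ξ_i`
is encoded by `i : ℕ`): `Z_1 = ξ_1`, `Z_{n+1} = Z_n ξ_{n+1} Z_n`
(with the convention `Z_0` empty). -/
def Zimin : ℕ → List ℕ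
  | 0 => []
  | n + 1 => Zimin n ++ [n + 1] ++ Zimin n

/-- `C(x_1 x_2 ... x_{k-1})`: the `p`-th letter is `ξ_{i+1}` where
`p = 2^i(2r+1)`, i.e. `i = padicValNat 2 p`. -/
def CW (k : ℕ) : List ℕ := (List.range (k - 1)).map (fun q => padicValNat 2 (q + 1) + 1)

/-- The map `C` of Definition 8 on the letters of `X`: `C(x_p) = ξ_{ν₂(p)+1}`
for `1 ≤ p ≤ k-1`, and `C(x_k) = Z' ξ_{t+1}` where `Z_t = C(x_1...x_{k-1}) Z'`
for the least `t` making `C(x_1...x_{k-1})` a prefix of `Z_t`;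
`C` is extended letterwise to words via `List.flatMap`. -/
def Cmap (k t : ℕ) (Z' : List ℕ) : ℕ → List ℕ :=
  fun p => if p = k then Z' ++ [t + 1] else [padicValNat 2 p + 1]

theorem padicValNat_two_of_odd {j : ℕ} (hj : j % 2 = 1) : padicValNat 2 j = 0 :=
  padicValNat.eq_zero_of_not_dvd (by omega)

theorem padicValNat_two_of_mod_four {j : ℕ} (hj : j % 4 = 2) : padicValNat 2 j = 1 := by
  obtain ⟨m, rfl⟩ : ∃ m, j = 2 * m := ⟨j / 2, by omega⟩
  rw [padicValNat.mul (by decide) (by omega), padicValNat.self (by decide),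
    padicValNat_two_of_odd (by omega)]

theorem Cmap_of_odd {k t : ℕ} {Z' : List ℕ} (h4 : 4 ∣ k) {j : ℕ} (hj : j % 2 = 1) :
    Cmap k t Z' j = [1] := by
  rw [Cmap, if_neg (by omega), padicValNat_two_of_odd hj]

theorem Cmap_of_mod_four {k t : ℕ} {Z' : List ℕ} (h4 : 4 ∣ k) {j : ℕ} (hj : j % 4 = 2) :
    Cmap k t Z' j = [2] := by
  rw [Cmap, if_neg (by omega), padicValNat_two_of_mod_four hj]

theorem Cmap_f1 {k t : ℕ} {Z' : List ℕ} (h4 : 4 ∣ k) (j : ℕ) :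
    Cmap k t Z' (f1 k j) = Cmap k t Z' j := by
  by_cases hj : j % 2 = 1
  · rw [Cmap_of_odd h4 hj, Cmap_of_odd h4]
    simp only [f1, if_pos hj]
    split_ifs <;> omega
  · simp [f1, hj]

theorem Cmap_g1 {k t : ℕ} {Z' : List ℕ} (h4 : 4 ∣ k) (j : ℕ) :
    Cmap k t Z' (g1 k j) = Cmap k t Z' j := by
  by_cases hj : j % 4 = 2
  · rw [Cmap_of_mod_four h4 hj, Cmap_of_mod_four h4]
    simp only [g1, if_pos hj]
    split_ifs <;> omega
  · simp [g1, hj]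

theorem Cmap_iterate_f1 {k t : ℕ} {Z' : List ℕ} (h4 : 4 ∣ k) (n j : ℕ) :
    Cmap k t Z' ((f1 k)^[n] j) = Cmap k t Z' j := by
  induction n with
  | zero => rfl
  | succ n ih => rw [Function.iterate_succ_apply', Cmap_f1 h4, ih]

theorem Cmap_v {k t : ℕ} {Z' : List ℕ} (h4 : 4 ∣ k) (i j : ℕ) :
    Cmap k t Z' (v k i j) = Cmap k t Z' j := by
  unfold v
  split_ifs
  · exact Cmap_iterate_f1 h4 i j
  · rw [Function.comp_apply, Cmap_g1 h4, Cmap_iterate_f1 h4]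

/-- The image of `x_1 x_2 ... x_k` under `C`. -/
theorem flatMap_Cmap_range {k t : ℕ} {Z' : List ℕ} (hk : 0 < k) :
    ((List.range k).map (fun p => p + 1)).flatMap (Cmap k t Z') = CW k ++ Z' ++ [t + 1] := by
  obtain ⟨m, rfl⟩ : ∃ m, k = m + 1 := ⟨k - 1, by omega⟩
  have h : (List.range m).flatMap (fun p => Cmap (m + 1) t Z' (p + 1)) = CW (m + 1) := by
    rw [CW, Nat.add_sub_cancel, List.map_eq_flatMap]
    refine List.flatMap_congr fun p hp => ?_
    have := List.mem_range.mp hp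
    rw [Cmap, if_neg (by omega)]
  rw [List.flatMap_map, List.range_succ, List.flatMap_append, h]
  simp [Cmap]

/-- Let `t` be the least integer with `C(x_1...x_{k-1})` a prefix of `Z_t` and
write `Z_t = C(x_1...x_{k-1}) Z'`. Then `C(a_i) = Z_t ξ_{t+1}` for every
`i ∈ {1,...,k}`; that is, the `C`-image of each `a_i` coincides with the
`C`-image of `x_1 x_2 ... x_k`, namely `Z_t ξ_{t+1}`. -/
theorem C_image_of_a (k : ℕ) (hk : 0 < k) (h4 : 4 ∣ k)
    (t : ℕ) (ht : CW k <+: Zimin t) (htmin : ∀ s : ℕ, CW k <+: Zimin s → t ≤ s)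
    (Z' : List ℕ) (hZ' : Zimin t = CW k ++ Z') :
    (∀ i ∈ Finset.Icc 1 k, (aw k i).flatMap (Cmap k t Z') = Zimin t ++ [t + 1]) ∧
    ((List.range k).map (fun p => p + 1)).flatMap (Cmap k t Z') = Zimin t ++ [t + 1] := by
  have hid := flatMap_Cmap_range (t := t) (Z' := Z') hk
  rw [← hZ'] at hid
  refine ⟨fun i _ => ?_, hid⟩
  rw [← hid, aw, List.flatMap_map, List.flatMap_map]
  exact List.flatMap_congr fun p _ => Cmap_v h4 i (p + 1)
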